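/- arXiv:2208.10054 — 3 statements merged into one kernel-verified Lean document; each statement's English description precedes it below -/
import Mathlib

section
/- Let a, x, c ∈ ℝ with a ≤ x and a ≤ c, and let α, β > 0. Then ∫_a^x 1/(α·(max(u−c,0))² + 1/β) du = β·(min(x,c) − a) + √(β/α)·arctan(√(αβ)·max(x−c,0)). -/
open Real

/-! Below the threshold `c` the integrand is constant, and above it the substitution `t = u - c`
removes the truncation. Splitting at `c` therefore reduces the integral to a constant contribution
plus `∫ 1 / (p t² + q) dt`, which the scaling `s = √(p / q) t` turns into the arctangent
integral. -/

section Truncation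

open MeasureTheory Set

variable {a c x : ℝ}

lemma eqOn_comp_max_sub_zero_of_le {γ : Type*} (g : ℝ → γ) (hxc : x ≤ c) :
    EqOn (fun u => g (max (u - c) 0)) (fun _ => g 0) (uIcc c x) := by
  intro u hu
  rw [uIcc_of_ge hxc] at hu
  simp only [max_eq_right (sub_nonpos.2 hu.2)]

lemma eqOn_comp_max_sub_zero_of_ge {γ : Type*} (g : ℝ → γ) (hcx : c ≤ x) :
    EqOn (fun u => g (max (u - c) 0)) (fun u => g (u - c)) (uIcc c x) := by
  intro u hu
  rw [uIcc_of_le hcx] at hu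
  simp only [max_eq_left (sub_nonneg.2 hu.1)]

variable {E : Type*} [NormedAddCommGroup E] {g : ℝ → E}

lemma intervalIntegrable_comp_max_sub_zero
    (hg : IntervalIntegrable g volume 0 (max (x - c) 0)) :
    IntervalIntegrable (fun u => g (max (u - c) 0)) volume c x := by
  rcases le_total x c with hxc | hcx
  · exact intervalIntegrable_const.congr
      ((eqOn_comp_max_sub_zero_of_le g hxc).symm.mono uIoc_subset_uIcc)
  · rw [max_eq_left (sub_nonneg.2 hcx)] at hg
    have hshift : IntervalIntegrable (fun u => g (u - c)) volume c x := by
      simpa only [zero_add, sub_add_cancel] using hg.comp_sub_right c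
    exact hshift.congr ((eqOn_comp_max_sub_zero_of_ge g hcx).symm.mono uIoc_subset_uIcc)

variable [NormedSpace ℝ E] [CompleteSpace E]

lemma integral_comp_max_sub_zero_from_threshold (g : ℝ → E) (c x : ℝ) :
    ∫ u in c..x, g (max (u - c) 0) =
      (min x c - c) • g 0 + ∫ t in 0..max (x - c) 0, g t := by
  rcases le_total x c with hxc | hcx
  · rw [intervalIntegral.integral_congr (eqOn_comp_max_sub_zero_of_le g hxc),
      intervalIntegral.integral_const, min_eq_left hxc, max_eq_right (sub_nonpos.2 hxc),
      intervalIntegral.integral_same, add_zero]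
  · rw [intervalIntegral.integral_congr (eqOn_comp_max_sub_zero_of_ge g hcx),
      intervalIntegral.integral_comp_sub_right, min_eq_right hcx,
      max_eq_left (sub_nonneg.2 hcx), sub_self, zero_smul, zero_add]

lemma integral_comp_max_sub_zero
    (ha : IntervalIntegrable g volume 0 (max (a - c) 0))
    (hx : IntervalIntegrable g volume 0 (max (x - c) 0)) :
    ∫ u in a..x, g (max (u - c) 0) =
      (min x c - min a c) • g 0 + ∫ t in max (a - c) 0..max (x - c) 0, g t := by
  rw [← intervalIntegral.integral_interval_sub_left (intervalIntegrable_comp_max_sub_zero hx)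
      (intervalIntegrable_comp_max_sub_zero ha),
    ← intervalIntegral.integral_interval_sub_left hx ha,
    integral_comp_max_sub_zero_from_threshold, integral_comp_max_sub_zero_from_threshold]
  module

end Truncation

section Arctan

variable {p q : ℝ}

lemma continuous_one_div_mul_sq_add (hp : 0 ≤ p) (hq : 0 < q) :
    Continuous fun t : ℝ => 1 / (p * t ^ 2 + q) :=
  continuous_const.div (by fun_prop) fun t => by positivity

lemma integral_one_div_mul_sq_add (hp : 0 < p) (hq : 0 < q) (a b : ℝ) :
    ∫ t in a..b, 1 / (p * t ^ 2 + q) =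
      (√(p * q))⁻¹ * (arctan (√(p / q) * b) - arctan (√(p / q) * a)) := by
  have hscale : √(p / q) ≠ 0 := by positivity
  have hintegrand (t : ℝ) : 1 / (p * t ^ 2 + q) = q⁻¹ * (1 / (1 + (√(p / q) * t) ^ 2)) := by
    rw [mul_pow, sq_sqrt (by positivity)]
    field_simp
    ring
  have hfactor : √(p * q) = q * √(p / q) := by
    rw [show p * q = q ^ 2 * (p / q) by field_simp, sqrt_mul (sq_nonneg q), sqrt_sq hq.le]
  simp only [hintegrand]
  rw [intervalIntegral.integral_const_mul,
    intervalIntegral.integral_comp_mul_left (fun s => 1 / (1 + s ^ 2)) hscale,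
    integral_one_div_one_add_sq, hfactor, mul_inv, smul_eq_mul, mul_assoc]

end Arctan

theorem landscape_modification_integral_f2_general (a x c : ℝ) {α β : ℝ}
    (hα : 0 < α) (hβ : 0 < β) :
    ∫ u in a..x, 1 / (α * max (u - c) 0 ^ 2 + 1 / β) =
      β * (min x c - min a c) +
        √(β / α) * (arctan (√(α * β) * max (x - c) 0) - arctan (√(α * β) * max (a - c) 0)) := by
  have hβ_inv : 0 < 1 / β := one_div_pos.2 hβ
  have hcont := continuous_one_div_mul_sq_add hα.le hβ_inv
  have hcoeff : (√(α * (1 / β)))⁻¹ = √(β / α) := by rw [mul_one_div, ← sqrt_inv, inv_div]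
  have hscale : √(α / (1 / β)) = √(α * β) := by rw [div_div_eq_mul_div, div_one]
  have hconst : 1 / (α * 0 ^ 2 + 1 / β) = β := by simp
  rw [integral_comp_max_sub_zero (g := fun t => 1 / (α * t ^ 2 + 1 / β))
      (hcont.intervalIntegrable _ _) (hcont.intervalIntegrable _ _),
    integral_one_div_mul_sq_add hα hβ_inv, hcoeff, hscale, hconst, smul_eq_mul, mul_comm β]

/-- Closed-form evaluation of the landscape-modified Hamiltonian integral for the
quadratic modification `f₂(x) = x²`:
`∫_a^x du / (α (u-c)₊² + 1/β) = β (min x c - a) + √(β/α) arctan(√(αβ) (x-c)₊)`. -/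
theorem landscape_modification_integral_f2 (a x c α β : ℝ) (hax : a ≤ x) (hac : a ≤ c)
    (hα : 0 < α) (hβ : 0 < β) :
    (∫ u in a..x, 1 / (α * max (u - c) 0 ^ 2 + 1 / β)) =
      β * (min x c - a) +
        Real.sqrt (β / α) * Real.arctan (Real.sqrt (α * β) * max (x - c) 0) := by
  simpa only [min_eq_left hac, max_eq_right (sub_nonpos.2 hac), mul_zero, arctan_zero, sub_zero]
    using landscape_modification_integral_f2_general a x c hα hβ
end

section
/- For every sequence (ε_N)_{N≥1} of real numbers with ε_N → 0 as N → ∞, the minimum of the Random Energy Model Hamiltonian satisfies lim_{N→∞} ℙ( min_{σ∈Σ_N} ℋ_N(σ) > −N·√(2 ln 2) − ε_N ) = 1; equivalently, lim_{N→∞} ℙ( max_{σ∈Σ_N} X_σ < √(2N ln 2) + ε_N/√N ) = 1. -/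
open Real Finset Filter MeasureTheory ProbabilityTheory

/-- Spin configuration space `Σ_N = {−1,+1}^N`. -/
abbrev Conf (N : ℕ) := Fin N → Bool

/-- The law of the i.i.d. standard Gaussian disorder `(X_σ)_{σ ∈ Σ_N}` of the
Random Energy Model. -/
noncomputable def remMeasure (N : ℕ) : Measure (Conf N → ℝ) :=
  Measure.pi fun _ => gaussianReal 0 1

/-!
Among `m` i.i.d. standard Gaussians, the expected number exceeding `u + δ`, where
`u = √(2 log m)`, is at most `exp (-u δ) / (u + δ)`: the factor `m` cancels `exp (-u² / 2)`.
It tends to `0` as soon as `u δ + log u → ∞`, since this forces `u + δ ≥ u / 2` eventually, and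
then with high probability no variable exceeds `u + δ`. For the Random Energy Model `m = 2 ^ N`
and `δ = ε / √N`, so that up to an additive constant the condition reads
`√(2 log 2) ε + (log N) / 2 → ∞`. The logarithm, which comes from the denominator of the tail
bound, leaves room for every bounded `ε`.
-/

section GaussianTail

variable (μ : ℝ) (v : NNReal)

/-- The parabola `(y - μ)² / (2 v)` lies above its tangent line at `x`. -/
theorem gaussianPDFReal_le_mul_exp (x y : ℝ) :
    gaussianPDFReal μ v y ≤ gaussianPDFReal μ v x * exp (-((x - μ) / v) * (y - x)) := by
  have htangent : -(y - μ) ^ 2 / (2 * v) ≤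
      -(x - μ) ^ 2 / (2 * v) + -((x - μ) / v) * (y - x) := by
    have hgap : -(x - μ) ^ 2 / (2 * v) + -((x - μ) / v) * (y - x) =
        -(y - μ) ^ 2 / (2 * v) + (y - x) ^ 2 / (2 * v) := by ring
    rw [hgap]
    exact le_add_of_nonneg_right (by positivity)
  rw [gaussianPDFReal, gaussianPDFReal, mul_assoc (√(2 * π * v))⁻¹, ← exp_add]
  gcongr

variable {μ}

theorem gaussianReal_Ici_le_mul_gaussianPDFReal {x : ℝ} (hx : μ < x) :
    gaussianReal μ v (Set.Ici x) ≤ ENNReal.ofReal (v / (x - μ) * gaussianPDFReal μ v x) := by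
  rcases eq_or_ne v 0 with rfl | hv
  · simp [hx]
  set a : ℝ := (x - μ) / v with ha
  have ha_neg : -a < 0 := neg_lt_zero.mpr (div_pos (sub_pos.mpr hx) (by positivity))
  have hexp (y : ℝ) : exp (-a * (y - x)) = exp (a * x) * exp (-a * y) := by
    rw [← exp_add]
    ring_nf
  have hintegrable : IntegrableOn (fun y => exp (-a * (y - x))) (Set.Ioi x) := by
    simp only [hexp]
    exact (integrableOn_exp_mul_Ioi ha_neg x).const_mul _
  have hintegral : ∫ y in Set.Ioi x, exp (-a * (y - x)) = v / (x - μ) := by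
    simp only [hexp]
    rw [integral_const_mul, integral_exp_mul_Ioi ha_neg, neg_div_neg_eq, ← mul_div_assoc,
      ← exp_add, neg_mul, add_neg_cancel, exp_zero, ha, one_div_div]
  rw [gaussianReal_apply_eq_integral μ hv, integral_Ici_eq_integral_Ioi]
  gcongr
  calc
    ∫ y in Set.Ioi x, gaussianPDFReal μ v y
        ≤ ∫ y in Set.Ioi x, gaussianPDFReal μ v x * exp (-a * (y - x)) :=
      integral_mono (integrable_gaussianPDFReal μ v).integrableOn (hintegrable.const_mul _)
        (gaussianPDFReal_le_mul_exp μ v x)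
    _ = v / (x - μ) * gaussianPDFReal μ v x := by
      rw [integral_const_mul, hintegral, mul_comm]

end GaussianTail

theorem measure_pi_exists_mem_le_sum {ι : Type*} [Fintype ι] {X : ι → Type*}
    [∀ i, MeasurableSpace (X i)] (μ : ∀ i, Measure (X i)) [∀ i, IsProbabilityMeasure (μ i)]
    (s : ∀ i, Set (X i)) :
    Measure.pi μ {ω | ∃ i, ω i ∈ s i} ≤ ∑ i, μ i (s i) := by
  have hcoord (i : ι) : Measure.pi μ (Function.eval i ⁻¹' s i) ≤ μ i (s i) := by
    have heval := measurePreserving_eval μ i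
    simpa only [heval.map_eq] using Measure.le_map_apply heval.aemeasurable (s i)
  calc
    Measure.pi μ {ω | ∃ i, ω i ∈ s i} = Measure.pi μ (⋃ i, Function.eval i ⁻¹' s i) := by
      congr 1
      ext ω
      simp
    _ ≤ ∑ i, Measure.pi μ (Function.eval i ⁻¹' s i) := measure_iUnion_fintype_le _ _
    _ ≤ ∑ i, μ i (s i) := sum_le_sum fun i _ => hcoord i

theorem tendsto_measure_one_of_tendsto_measure_compl_zero {α : Type*} {l : Filter α}
    {Ω : α → Type*} [∀ a, MeasurableSpace (Ω a)] {P : ∀ a, Measure (Ω a)}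
    [∀ a, IsProbabilityMeasure (P a)] {s : ∀ a, Set (Ω a)}
    (h : Tendsto (fun a => P a (s a)ᶜ) l (nhds 0)) :
    Tendsto (fun a => P a (s a)) l (nhds 1) := by
  have hlower : Tendsto (fun a => 1 - P a (s a)ᶜ) l (nhds 1) := by
    simpa only [tsub_zero] using
      ENNReal.Tendsto.sub tendsto_const_nhds h (Or.inl ENNReal.one_ne_top)
  refine tendsto_of_tendsto_of_tendsto_of_le_of_le hlower tendsto_const_nhds (fun a => ?_)
    fun a => prob_le_one
  rw [tsub_le_iff_right, ← measure_univ (μ := P a), ← Set.union_compl_self (s a)]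
  exact measure_union_le _ _

section GaussianMaximum

/-- The leading-order location of the maximum of `m` i.i.d. standard Gaussians, for real `m` so
that it applies to casts of cardinalities. -/
noncomputable def gaussianMaxLevel (m : ℝ) : ℝ := √(2 * log m)

theorem tendsto_gaussianMaxLevel_atTop : Tendsto gaussianMaxLevel atTop atTop :=
  tendsto_sqrt_atTop.comp (tendsto_log_atTop.const_mul_atTop zero_lt_two)

theorem mul_gaussianPDFReal_gaussianMaxLevel_add_le {m : ℝ} (hm : 1 ≤ m) (δ : ℝ) :
    m * gaussianPDFReal 0 1 (gaussianMaxLevel m + δ) ≤ exp (-(gaussianMaxLevel m * δ)) := by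
  have hsq : gaussianMaxLevel m ^ 2 = 2 * log m :=
    sq_sqrt (mul_nonneg zero_le_two (log_nonneg hm))
  have hnorm : (√(2 * π))⁻¹ ≤ 1 :=
    inv_le_one_of_one_le₀ (one_le_sqrt.mpr (by linarith [pi_gt_three]))
  calc
    m * gaussianPDFReal 0 1 (gaussianMaxLevel m + δ)
        = (√(2 * π))⁻¹ * (exp (log m) * exp (-(gaussianMaxLevel m + δ) ^ 2 / 2)) := by
      rw [exp_log (zero_lt_one.trans_le hm), gaussianPDFReal]
      simp only [NNReal.coe_one, mul_one, sub_zero]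
      ring
    _ ≤ exp (log m) * exp (-(gaussianMaxLevel m + δ) ^ 2 / 2) :=
      mul_le_of_le_one_left (by positivity) hnorm
    _ ≤ exp (-(gaussianMaxLevel m * δ)) := by
      rw [← exp_add, exp_le_exp]
      linarith [sq_nonneg δ, add_sq (gaussianMaxLevel m) δ]

theorem measure_pi_gaussianReal_exists_gaussianMaxLevel_add_le {ι : Type*} [Fintype ι]
    [Nonempty ι] {δ : ℝ} (hδ : 0 < gaussianMaxLevel (Fintype.card ι) + δ) :
    Measure.pi (fun _ : ι => gaussianReal 0 1)
        {ω | ∃ i, gaussianMaxLevel (Fintype.card ι) + δ ≤ ω i} ≤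
      ENNReal.ofReal (exp (-(gaussianMaxLevel (Fintype.card ι) * δ)) /
        (gaussianMaxLevel (Fintype.card ι) + δ)) := by
  set m : ℝ := (Fintype.card ι : ℝ) with hm
  set t : ℝ := gaussianMaxLevel m + δ
  have hm_one : 1 ≤ m := Nat.one_le_cast.mpr Fintype.card_pos
  calc
    Measure.pi (fun _ : ι => gaussianReal 0 1) {ω | ∃ i, t ≤ ω i}
        ≤ ∑ _ : ι, gaussianReal 0 1 (Set.Ici t) :=
      measure_pi_exists_mem_le_sum (fun _ : ι => gaussianReal 0 1) fun _ => Set.Ici t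
    _ = ENNReal.ofReal m * gaussianReal 0 1 (Set.Ici t) := by
      rw [sum_const, card_univ, nsmul_eq_mul, hm, ENNReal.ofReal_natCast]
    _ ≤ ENNReal.ofReal m * ENNReal.ofReal (gaussianPDFReal 0 1 t / t) := by
      gcongr
      simpa [div_eq_inv_mul] using gaussianReal_Ici_le_mul_gaussianPDFReal 1 hδ
    _ = ENNReal.ofReal (m * gaussianPDFReal 0 1 t / t) := by
      rw [← ENNReal.ofReal_mul (zero_le_one.trans hm_one), mul_div_assoc]
    _ ≤ ENNReal.ofReal (exp (-(gaussianMaxLevel m * δ)) / t) := by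
      gcongr
      exact mul_gaussianPDFReal_gaussianMaxLevel_add_le hm_one δ

variable {α : Type*} {l : Filter α}

theorem eventually_half_le_add_of_tendsto_mul_add_log {u δ : α → ℝ} (hu : Tendsto u l atTop)
    (h : Tendsto (fun a => u a * δ a + log (u a)) l atTop) :
    ∀ᶠ a in l, u a / 2 ≤ u a + δ a := by
  filter_upwards [hu.eventually_ge_atTop 2, h.eventually_ge_atTop 0] with a hu_two hnonneg
  have hu_pos : 0 < u a := zero_lt_two.trans_le hu_two
  have hδ : -1 ≤ δ a :=
    le_of_mul_le_mul_left (by linarith [log_le_sub_one_of_pos hu_pos]) hu_pos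
  linarith

theorem tendsto_exp_neg_mul_div_add_of_tendsto_mul_add_log {u δ : α → ℝ}
    (hu : Tendsto u l atTop) (h : Tendsto (fun a => u a * δ a + log (u a)) l atTop) :
    Tendsto (fun a => exp (-(u a * δ a)) / (u a + δ a)) l (nhds 0) := by
  have hbound : Tendsto (fun a => 2 * exp (-(u a * δ a + log (u a)))) l (nhds 0) := by
    simpa only [mul_zero, Function.comp_def] using
      (tendsto_exp_neg_atTop_nhds_zero.comp h).const_mul 2
  have hhalf := eventually_half_le_add_of_tendsto_mul_add_log hu h
  refine squeeze_zero' ?_ ?_ hbound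
  · filter_upwards [hhalf, hu.eventually_gt_atTop 0] with a ha hu_pos
    exact div_nonneg (exp_nonneg _) (by linarith)
  · filter_upwards [hhalf, hu.eventually_gt_atTop 0] with a ha hu_pos
    calc
      exp (-(u a * δ a)) / (u a + δ a) ≤ exp (-(u a * δ a)) / (u a / 2) := by gcongr
      _ = 2 * exp (-(u a * δ a + log (u a))) := by
        rw [neg_add, exp_add, exp_neg (log _), exp_log hu_pos]
        field_simp

theorem tendsto_measure_pi_gaussianReal_forall_lt_gaussianMaxLevel_add {ι : α → Type*}
    [∀ a, Fintype (ι a)] {δ : α → ℝ}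
    (hcard : Tendsto (fun a => Fintype.card (ι a)) l atTop)
    (hδ : Tendsto (fun a => gaussianMaxLevel (Fintype.card (ι a)) * δ a +
      log (gaussianMaxLevel (Fintype.card (ι a)))) l atTop) :
    Tendsto (fun a => Measure.pi (fun _ : ι a => gaussianReal 0 1)
      {ω | ∀ i, ω i < gaussianMaxLevel (Fintype.card (ι a)) + δ a}) l (nhds 1) := by
  have hlevel : Tendsto (fun a => gaussianMaxLevel (Fintype.card (ι a))) l atTop :=
    tendsto_gaussianMaxLevel_atTop.comp (tendsto_natCast_atTop_atTop.comp hcard)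
  have hbound := ENNReal.tendsto_ofReal
    (tendsto_exp_neg_mul_div_add_of_tendsto_mul_add_log hlevel hδ)
  rw [ENNReal.ofReal_zero] at hbound
  refine tendsto_measure_one_of_tendsto_measure_compl_zero
    (tendsto_of_tendsto_of_tendsto_of_le_of_le' tendsto_const_nhds hbound
      (Eventually.of_forall fun _ => zero_le) ?_)
  filter_upwards [hcard.eventually_gt_atTop 0, hlevel.eventually_gt_atTop 0,
    eventually_half_le_add_of_tendsto_mul_add_log hlevel hδ] with a hcard_pos hlevel_pos hhalf
  have : Nonempty (ι a) := Fintype.card_pos_iff.mp hcard_pos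
  simpa only [Set.compl_ofPred, not_forall, not_lt] using
    measure_pi_gaussianReal_exists_gaussianMaxLevel_add_le (ι := ι a) (δ := δ a) (by linarith)

end GaussianMaximum

theorem tendsto_card_conf_atTop : Tendsto (fun N => Fintype.card (Conf N)) atTop atTop := by
  simpa using tendsto_pow_atTop_atTop_of_one_lt one_lt_two

theorem gaussianMaxLevel_card_conf (N : ℕ) :
    gaussianMaxLevel (Fintype.card (Conf N)) = √N * √(2 * log 2) := by
  have hcard : (Fintype.card (Conf N) : ℝ) = 2 ^ N := by simp
  rw [gaussianMaxLevel, hcard, log_pow, mul_left_comm, sqrt_mul (Nat.cast_nonneg N)]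

theorem neg_sq_mul_sub_lt_inf'_neg_mul_iff {ι : Type*} {s : Finset ι} (hs : s.Nonempty)
    {r : ℝ} (hr : 0 < r) (c e : ℝ) (x : ι → ℝ) :
    -r ^ 2 * c - e < s.inf' hs (fun i => -r * x i) ↔ ∀ i ∈ s, x i < r * c + e / r := by
  have hscale : r * (r * c + e / r) = r ^ 2 * c + e := by field_simp
  rw [lt_inf'_iff]
  refine forall₂_congr fun i _ => ?_
  rw [← mul_lt_mul_iff_right₀ hr (b := x i), hscale]
  constructor <;> intro h <;> linarith

theorem rem_min_lower_bound_whp_general (ε : ℕ → ℝ)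
    (hε : Tendsto (fun N : ℕ => √(2 * log 2) * ε N + log N / 2) atTop atTop) :
    Tendsto (fun N : ℕ =>
        remMeasure N {ω : Conf N → ℝ |
          -(N : ℝ) * √(2 * log 2) - ε N <
            Finset.univ.inf' Finset.univ_nonempty fun σ : Conf N => -√N * ω σ})
      atTop (nhds 1) := by
  have hδ : Tendsto (fun N : ℕ => gaussianMaxLevel (Fintype.card (Conf N)) * (ε N / √N) +
      log (gaussianMaxLevel (Fintype.card (Conf N)))) atTop atTop := by
    refine (tendsto_atTop_add_const_right _ (log √(2 * log 2)) hε).congr' ?_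
    filter_upwards [eventually_gt_atTop 0] with N hN
    have hc : 0 < √(2 * log 2) := by positivity
    rw [gaussianMaxLevel_card_conf, log_mul (by positivity) hc.ne', log_sqrt (Nat.cast_nonneg N)]
    field_simp
    ring
  refine (tendsto_measure_pi_gaussianReal_forall_lt_gaussianMaxLevel_add tendsto_card_conf_atTop
    hδ).congr' ?_
  filter_upwards [eventually_gt_atTop 0] with N hN
  have hgood (ω : Conf N → ℝ) :=
    neg_sq_mul_sub_lt_inf'_neg_mul_iff univ_nonempty (sqrt_pos.mpr (Nat.cast_pos.mpr hN))
      (√(2 * log 2)) (ε N) ω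
  simp only [sq_sqrt (Nat.cast_nonneg N), mem_univ, true_imp_iff] at hgood
  simp only [remMeasure, gaussianMaxLevel_card_conf, hgood]

/-- For any deterministic sequence `ε_N → 0`, with high probability the minimum of the
REM Hamiltonian `ℋ_N(σ) = −√N X_σ` exceeds `−N√(2 ln 2) − ε_N`. -/
theorem rem_min_lower_bound_whp (ε : ℕ → ℝ) (hε : Tendsto ε atTop (nhds 0)) :
    Tendsto (fun N : ℕ =>
        remMeasure N {ω : Conf N → ℝ |
          -(N : ℝ) * Real.sqrt (2 * Real.log 2) - ε N <
            Finset.univ.inf' Finset.univ_nonempty fun σ : Conf N =>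
              -Real.sqrt N * ω σ})
      atTop (nhds 1) :=
  rem_min_lower_bound_whp_general ε <| (hε.const_mul _).add_atTop <|
    (tendsto_log_atTop.comp tendsto_natCast_atTop_atTop).atTop_div_const zero_lt_two
end

section
/- The minimum of the Random Energy Model Hamiltonian satisfies lim_{N→∞} ℙ( min_{σ∈Σ_N} ℋ_N(σ) < −N·√(2 ln 2) + ln N ) = 1. -/
/-!
The energies `-√N X_σ` are `2 ^ N` independent Gaussians of variance `N`, so the probability that
none of them lies below a level `x` is at most `exp (-m)`, where `m` is the expected number of
energies below `x`. With `βc = √(2 log 2)`, the factor `2 ^ N` cancels `exp (-N βc² / 2)` in the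
Gaussian density at `-N βc + u`, and `2 ^ N` times that density is of order `exp (βc u) / √N` for
`u = O(√N)`. Hence `m → ∞` at the level `-N βc + t N` as soon as `βc t N - (log N) / 2 → ∞`; for
`t N = log N` this holds because `βc > 1 / 2`.
-/

open Real Finset Filter MeasureTheory ProbabilityTheory

open scoped NNReal Topology

section IndependentEvents

variable {ι : Type*} [Fintype ι] {Ω : ι → Type*} [∀ i, MeasurableSpace (Ω i)]

lemma one_sub_exp_neg_sum_le_measureReal_pi_exists_mem (μ : ∀ i, Measure (Ω i))
    [∀ i, IsProbabilityMeasure (μ i)] {s : ∀ i, Set (Ω i)} (hs : ∀ i, MeasurableSet (s i)) :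
    1 - exp (-∑ i, (μ i).real (s i)) ≤ (Measure.pi μ).real {ω | ∃ i, ω i ∈ s i} := by
  have hset : {ω : ∀ i, Ω i | ∃ i, ω i ∈ s i} = (Set.univ.pi fun i => (s i)ᶜ)ᶜ := by
    ext ω
    simp
  rw [hset, probReal_compl_eq_one_sub (MeasurableSet.univ_pi fun i => (hs i).compl)]
  gcongr
  calc (Measure.pi μ).real (Set.univ.pi fun i => (s i)ᶜ)
      = ∏ i, (1 - (μ i).real (s i)) := by
        rw [measureReal_def, Measure.pi_pi, ENNReal.toReal_prod]
        exact prod_congr rfl fun i _ => probReal_compl_eq_one_sub (hs i)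
    _ ≤ ∏ i, exp (-(μ i).real (s i)) :=
        prod_le_prod (fun i _ => sub_nonneg.2 measureReal_le_one)
          fun i _ => one_sub_le_exp_neg _
    _ = exp (-∑ i, (μ i).real (s i)) := by rw [← exp_sum, sum_neg_distrib]

end IndependentEvents

section GaussianTail

variable (m : ℝ) (v : ℝ≥0)

lemma monotoneOn_gaussianPDFReal_Iic : MonotoneOn (gaussianPDFReal m v) (Set.Iic m) := by
  intro x _ y hy hxy
  have hsq : (y - m) ^ 2 ≤ (x - m) ^ 2 :=
    sq_le_sq.2 <|
      abs_le_abs_of_nonpos (sub_nonpos.2 hy) (sub_le_sub_right hxy m)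
  simp only [gaussianPDFReal]
  gcongr

variable {m v}

lemma sub_mul_gaussianPDFReal_le_gaussianReal_Ico {a b : ℝ} (hbm : b ≤ m) :
    (b - a) * gaussianPDFReal m v a ≤ (gaussianReal m v).real (Set.Ico a b) := by
  rcases eq_or_ne v 0 with rfl | hv
  · simp
  rcases le_total b a with hba | hab
  · exact (mul_nonpos_of_nonpos_of_nonneg (sub_nonpos.2 hba)
      (gaussianPDFReal_nonneg m v a)).trans measureReal_nonneg
  calc (b - a) * gaussianPDFReal m v a
      = gaussianPDFReal m v a * volume.real (Set.Ico a b) := by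
        rw [volume_real_Ico_of_le hab, mul_comm]
    _ ≤ ∫ x in Set.Ico a b, gaussianPDFReal m v x :=
        setIntegral_ge_of_const_le_real measurableSet_Ico measure_Ico_lt_top.ne
          (fun x hx => monotoneOn_gaussianPDFReal_Iic m v (hab.trans hbm)
            (hx.2.le.trans hbm) hx.1)
          (integrable_gaussianPDFReal m v).integrableOn
    _ = (gaussianReal m v).real (Set.Ico a b) := by
        rw [measureReal_def, gaussianReal_apply_eq_integral m hv, ENNReal.toReal_ofReal]
        exact integral_nonneg (gaussianPDFReal_nonneg m v)

end GaussianTail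

/-- The minimum over `Σ_N` of the Hamiltonian `ℋ_N(σ) = −√N X_σ`, as a function of the
disorder. -/
noncomputable def remMin (N : ℕ) (ω : Conf N → ℝ) : ℝ :=
  Finset.univ.inf' Finset.univ_nonempty fun σ => -√N * ω σ

/-- The critical inverse temperature of the Random Energy Model; the minimal energy is
`-N βc` to leading order. -/
local notation "βc" => √(2 * log 2)

lemma remMin_lt_iff {N : ℕ} {ω : Conf N → ℝ} {x : ℝ} :
    remMin N ω < x ↔ ∃ σ, -√N * ω σ < x := by
  simp [remMin, Finset.inf'_lt_iff]

instance isProbabilityMeasure_remMeasure (N : ℕ) : IsProbabilityMeasure (remMeasure N) := by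
  unfold remMeasure
  infer_instance

lemma gaussianReal_map_neg_sqrt_mul (N : ℕ) :
    (gaussianReal 0 1).map (-√N * ·) = gaussianReal 0 N := by
  rw [gaussianReal_map_const_mul]
  congr 1
  · simp
  · ext
    simp

lemma one_sub_exp_neg_le_remMeasure_remMin_lt (N : ℕ) (x : ℝ) :
    1 - exp (-(2 ^ N * (gaussianReal 0 N).real (Set.Iio x))) ≤
      (remMeasure N).real {ω | remMin N ω < x} := by
  have hmeas : Measurable (-√N * · : ℝ → ℝ) := measurable_const_mul _
  have h := one_sub_exp_neg_sum_le_measureReal_pi_exists_mem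
    (fun _ : Conf N => gaussianReal 0 1) fun _ => hmeas (measurableSet_Iio (a := x))
  rw [sum_const, ← map_measureReal_apply hmeas measurableSet_Iio,
    gaussianReal_map_neg_sqrt_mul] at h
  simpa [remMin_lt_iff, remMeasure] using h

lemma two_pow_mul_gaussianPDFReal {N : ℕ} (hN : N ≠ 0) (u : ℝ) :
    2 ^ N * gaussianPDFReal 0 N (-N * βc + u) =
      (√(2 * π))⁻¹ * exp (βc * u - u ^ 2 / (2 * N) - log N / 2) := by
  have hN' : (0 : ℝ) < N := by positivity
  have hβ : βc ^ 2 = 2 * log 2 := sq_sqrt (by positivity)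
  have hpow : (2 : ℝ) ^ N = exp (N * log 2) := by rw [exp_nat_mul, exp_log two_pos]
  have hsqrt : (√(N : ℝ))⁻¹ = exp (-(log N / 2)) := by
    rw [exp_neg, ← log_sqrt hN'.le, exp_log (sqrt_pos.2 hN')]
  have hexponent : N * log 2 + -(log N / 2) + -(-N * βc + u) ^ 2 / (2 * N) =
      βc * u - u ^ 2 / (2 * N) - log N / 2 := by
    generalize βc = b at hβ
    field_simp
    linear_combination -(N : ℝ) ^ 2 * hβ
  calc 2 ^ N * gaussianPDFReal 0 N (-N * βc + u)
      = (√(2 * π))⁻¹ * (2 ^ N * (√N)⁻¹ * exp (-(-N * βc + u) ^ 2 / (2 * N))) := by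
        simp only [gaussianPDFReal, NNReal.coe_natCast, sub_zero,
          sqrt_mul two_pi_pos.le, mul_inv]
        ring
    _ = (√(2 * π))⁻¹ * exp (βc * u - u ^ 2 / (2 * N) - log N / 2) := by
        rw [hpow, hsqrt, ← exp_add, ← exp_add, hexponent]

lemma one_le_sqrt_two_mul_log_two : 1 ≤ βc := by
  rw [one_le_sqrt]
  linarith [log_two_gt_d9]

lemma log_natCast_le_two_mul_sqrt (N : ℕ) : log N ≤ 2 * √N := by
  rcases N.eq_zero_or_pos with rfl | hN
  · simp
  have hN' : (0 : ℝ) < N := by exact_mod_cast hN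
  have h := log_le_self (sqrt_nonneg N)
  rw [log_sqrt hN'.le] at h
  linarith

lemma mul_exp_le_two_pow_mul_gaussianReal_Iio {N : ℕ} (hN : N ≠ 0) {s : ℝ} (hs₀ : 0 ≤ s)
    (hs : s ≤ log N) :
    (√(2 * π))⁻¹ * exp (βc * s - log N / 2 - (βc + 2)) ≤
      2 ^ N * (gaussianReal 0 N).real (Set.Iio (-N * βc + s)) := by
  have hN' : (1 : ℝ) ≤ N := by exact_mod_cast Nat.one_le_iff_ne_zero.2 hN
  have hquad : (s - 1) ^ 2 / (2 * N) ≤ 2 := by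
    have habs : |s - 1| ≤ 2 * √N := abs_le.2
      ⟨by linarith [one_le_sqrt.2 hN'], by linarith [log_natCast_le_two_mul_sqrt N]⟩
    have hsq := sq_le_sq' (abs_le.1 habs).1 (abs_le.1 habs).2
    rw [mul_pow, sq_sqrt N.cast_nonneg] at hsq
    rw [div_le_iff₀ (by positivity)]
    linarith
  have hneg : -N * βc + s ≤ 0 := by
    nlinarith [log_le_self N.cast_nonneg, one_le_sqrt_two_mul_log_two]
  calc (√(2 * π))⁻¹ * exp (βc * s - log N / 2 - (βc + 2))
      ≤ (√(2 * π))⁻¹ * exp (βc * (s - 1) - (s - 1) ^ 2 / (2 * N) - log N / 2) := by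
        gcongr (√(2 * π))⁻¹ * exp ?_
        linarith
    _ = 2 ^ N * gaussianPDFReal 0 N (-N * βc + (s - 1)) :=
        (two_pow_mul_gaussianPDFReal hN _).symm
    _ ≤ 2 ^ N * (gaussianReal 0 N).real (Set.Ico (-N * βc + (s - 1)) (-N * βc + s)) := by
        gcongr
        simpa using sub_mul_gaussianPDFReal_le_gaussianReal_Ico (v := N)
          (a := -N * βc + (s - 1)) hneg
    _ ≤ 2 ^ N * (gaussianReal 0 N).real (Set.Iio (-N * βc + s)) := by
        gcongr ?_ * ?_
        exact measureReal_mono Set.Ico_subset_Iio_self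

lemma tendsto_sqrt_two_mul_log_two_mul_log_sub_atTop :
    Tendsto (fun N : ℕ => βc * log N - log N / 2) atTop atTop := by
  have hpos : 0 < βc - 1 / 2 := by linarith [one_le_sqrt_two_mul_log_two]
  refine ((tendsto_log_atTop.comp tendsto_natCast_atTop_atTop).const_mul_atTop hpos).congr
    fun N => ?_
  simp only [Function.comp_apply]
  ring

lemma tendsto_two_pow_mul_gaussianReal_Iio_atTop {t : ℕ → ℝ}
    (ht : Tendsto (fun N : ℕ => βc * t N - log N / 2) atTop atTop) :
    Tendsto (fun N : ℕ => 2 ^ N * (gaussianReal 0 N).real (Set.Iio (-N * βc + t N)))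
      atTop atTop := by
  have hβ : 0 < βc := one_pos.trans_le one_le_sqrt_two_mul_log_two
  -- Lowering the threshold to `s ≤ log N` keeps the quadratic term of the exponent bounded.
  let s (N : ℕ) : ℝ := min (t N) (log N)
  have hs : Tendsto (fun N : ℕ => βc * s N - log N / 2) atTop atTop := by
    refine tendsto_atTop.2 fun C => ?_
    filter_upwards [tendsto_atTop.1 ht C,
      tendsto_atTop.1 tendsto_sqrt_two_mul_log_two_mul_log_sub_atTop C] with N htN hlogN
    rcases min_choice (t N) (log N) with h | h <;> simpa only [s, h]
  have hbound : Tendsto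
      (fun N : ℕ => (√(2 * π))⁻¹ * exp (βc * s N - log N / 2 - (βc + 2))) atTop atTop :=
    (tendsto_exp_atTop.comp (tendsto_atTop_add_const_right _ (-(βc + 2)) hs)).const_mul_atTop
      (by positivity)
  refine tendsto_atTop_mono' _ ?_ hbound
  filter_upwards [eventually_ne_atTop 0, hs.eventually_ge_atTop 0] with N hN hsN
  have hs₀ : 0 ≤ s N := nonneg_of_mul_nonneg_right (by linarith [log_natCast_nonneg N]) hβ
  refine (mul_exp_le_two_pow_mul_gaussianReal_Iio hN hs₀ (min_le_right _ _)).trans ?_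
  gcongr ?_ * ?_
  exact measureReal_mono (Set.Iio_subset_Iio (by gcongr; exact min_le_left _ _))

theorem rem_min_upper_bound_whp_general {t : ℕ → ℝ}
    (ht : Tendsto (fun N : ℕ => βc * t N - log N / 2) atTop atTop) :
    Tendsto (fun N : ℕ => remMeasure N {ω | remMin N ω < -N * βc + t N}) atTop (𝓝 1) := by
  have hlower : Tendsto (fun N : ℕ =>
      1 - exp (-(2 ^ N * (gaussianReal 0 N).real (Set.Iio (-N * βc + t N))))) atTop (𝓝 1) := by
    simpa using (tendsto_exp_neg_atTop_nhds_zero.comp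
      (tendsto_two_pow_mul_gaussianReal_Iio_atTop ht)).const_sub 1
  have hreal := tendsto_of_tendsto_of_tendsto_of_le_of_le hlower tendsto_const_nhds
    (fun N => one_sub_exp_neg_le_remMeasure_remMin_lt N _) fun N => measureReal_le_one
  simpa using ENNReal.tendsto_ofReal hreal

/-- With high probability the minimum of the REM Hamiltonian `ℋ_N(σ) = −√N X_σ` is
below `−N√(2 ln 2) + ln N`. -/
theorem rem_min_upper_bound_whp :
    Tendsto (fun N : ℕ =>
        remMeasure N {ω : Conf N → ℝ |
          (Finset.univ.inf' Finset.univ_nonempty fun σ : Conf N =>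
              -Real.sqrt N * ω σ) <
            -(N : ℝ) * Real.sqrt (2 * Real.log 2) + Real.log N})
      atTop (nhds 1) := by
  exact rem_min_upper_bound_whp_general tendsto_sqrt_two_mul_log_two_mul_log_sub_atTop
end
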